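/- arXiv:1912.02643 — 2 statements merged into one kernel-verified Lean document; each statement's English description precedes it below -/
import Mathlib

section
/- Let A be an n×n complex matrix satisfying Re(x*Ax) ≥ 0 for all x ∈ ℂⁿ, and let γ, γ̃ be real numbers with 0 < γ̃ ≤ γ. Then the spectral radius of the matrix G̃ := I − (I + γA)⁻¹(I + γ̃A) satisfies ρ(G̃) ≤ 1 − γ̃/γ. -/
open Matrix

lemma aux_star_self_pos {n : ℕ} (v : Fin n → ℂ) (hv : v ≠ 0) :
    ∃ s : ℝ, 0 < s ∧ star v ⬝ᵥ v = (s : ℂ) := by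
  refine ⟨∑ i, Complex.normSq (v i), ?_, ?_⟩
  · obtain ⟨i, hi⟩ := Function.ne_iff.mp hv
    exact Finset.sum_pos' (fun j _ => Complex.normSq_nonneg _)
      ⟨i, Finset.mem_univ _, Complex.normSq_pos.mpr hi⟩
  · simp [dotProduct, Complex.normSq_eq_conj_mul_self]

/-- Quantitative spectral radius bound from the proof of Proposition 2: if
`Re (x*Ax) ≥ 0` for all `x` and `0 < γ̃ ≤ γ`, then the Richardson iteration matrix
`G̃ = I - (I+γA)⁻¹(I+γ̃A)` satisfies `ρ(G̃) ≤ 1 - γ̃/γ`. -/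
theorem preconditioned_richardson_spectral_radius_bound (n : ℕ)
    (A : Matrix (Fin n) (Fin n) ℂ)
    (hA : ∀ x : Fin n → ℂ, 0 ≤ (star x ⬝ᵥ A.mulVec x).re)
    (γ γt : ℝ) (hγt : 0 < γt) (hγ : γt ≤ γ) :
    spectralRadius ℂ (1 - (1 + (γ : ℂ) • A)⁻¹ * (1 + (γt : ℂ) • A)) ≤
      ENNReal.ofReal (1 - γt / γ) := by
  have hγ0 : 0 < γ := lt_of_lt_of_le hγt hγ
  have hdot : ∀ v : Fin n → ℂ, ∀ c : ℂ, star v ⬝ᵥ (1 + c • A).mulVec v =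
      star v ⬝ᵥ v + c * (star v ⬝ᵥ A.mulVec v) := by
    intro v c
    simp [add_mulVec, smul_mulVec, dotProduct_add, dotProduct_smul]
  have hunit : IsUnit (1 + (γ : ℂ) • A).det := by
    rw [isUnit_iff_ne_zero]
    intro h0
    obtain ⟨v, hv, hMv⟩ := Matrix.exists_mulVec_eq_zero_iff.mpr h0
    obtain ⟨s, hs, hsv⟩ := aux_star_self_pos v hv
    have h1 := hdot v γ
    rw [hMv, hsv, dotProduct_zero] at h1
    have h2 := congrArg Complex.re h1
    simp at h2
    have := mul_nonneg hγ0.le (hA v)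
    linarith
  unfold spectralRadius
  refine iSup₂_le fun μ hμ => ?_
  rw [← Matrix.spectrum_toLin'] at hμ
  obtain ⟨v, hv⟩ := (Module.End.HasEigenvalue.of_mem_spectrum hμ).exists_hasEigenvector
  have hv1 := hv.apply_eq_smul
  have hv0 : v ≠ 0 := hv.2
  rw [Matrix.toLin'_apply] at hv1
  have h3 := congrArg (fun w => star v ⬝ᵥ (1 + (γ : ℂ) • A).mulVec w) hv1
  simp only [mulVec_mulVec, mulVec_sub, one_mulVec, Matrix.mul_nonsing_inv_cancel_left _ _ hunit,
    sub_mulVec, dotProduct_sub, mulVec_smul, dotProduct_smul, hdot, smul_eq_mul] at h3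
  obtain ⟨s, hs, hsv⟩ := aux_star_self_pos v hv0
  rw [hsv] at h3
  have ha := hA v
  generalize star v ⬝ᵥ A.mulVec v = a at h3 ha
  have h4 : ((γ - γt : ℝ) : ℂ) * a = μ * (s + γ * a) := by
    rw [← h3]; push_cast; ring
  have h5 := congrArg norm h4
  rw [norm_mul, norm_mul, Complex.norm_real, Real.norm_of_nonneg (by linarith)] at h5
  have hre : (s + γ * a : ℂ).re = s + γ * a.re := by simp
  have him : (s + γ * a : ℂ).im = γ * a.im := by simp
  have hga := mul_nonneg hγ0.le ha
  have hpos : 0 < ‖(s + γ * a : ℂ)‖ := by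
    rw [norm_pos_iff]
    intro h
    rw [h] at hre
    simp at hre
    linarith
  have hle : γ * ‖a‖ ≤ ‖(s + γ * a : ℂ)‖ := by
    refine (sq_le_sq₀ (by positivity) hpos.le).mp ?_
    rw [mul_pow, Complex.sq_norm, Complex.sq_norm, Complex.normSq_apply, Complex.normSq_apply,
      hre, him]
    nlinarith [mul_nonneg hs.le hga]
  have hfin : ‖μ‖ ≤ 1 - γt / γ := by
    refine le_of_mul_le_mul_right ?_ hpos
    rw [← h5]
    calc (γ - γt) * ‖a‖ = (1 - γt / γ) * (γ * ‖a‖) := by field_simp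
      _ ≤ _ := by
        apply mul_le_mul_of_nonneg_left hle
        rw [sub_nonneg, div_le_one hγ0]; exact hγ
  rw [← enorm_eq_nnnorm, ← ofReal_norm]
  exact ENNReal.ofReal_le_ofReal hfin
end

section
/- Let A be an n×n complex matrix satisfying Re(x*Ax) ≥ 0 for all x ∈ ℂⁿ, let ρ(A) denote the spectral radius of A, and let γ, γ̃ be real numbers with 0 < γ̃ ≤ γ. Assume that γ̃·ρ(A) < 1 and that 1/(1 + γ·ρ(A)) < γ̃/γ. Then the spectral radius of G̃ := I − (I + γA)⁻¹(I + γ̃A) is strictly smaller than the spectral radius of G := −γ̃A, i.e., ρ(G̃) < γ̃·ρ(A). -/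
open Matrix

theorem aux_self_dot {n : ℕ} (x : Fin n → ℂ) (hx : x ≠ 0) :
    ∃ s : ℝ, 0 < s ∧ star x ⬝ᵥ x = (s : ℂ) := by
  refine ⟨∑ i, Complex.normSq (x i), ?_, ?_⟩
  · obtain ⟨i, hi⟩ := Function.ne_iff.mp hx
    exact Finset.sum_pos' (fun i _ => Complex.normSq_nonneg _)
      ⟨i, Finset.mem_univ _, Complex.normSq_pos.mpr hi⟩
  · simp only [dotProduct, Pi.star_apply, Complex.ofReal_sum, Complex.normSq_eq_conj_mul_self]
    rfl

theorem aux_unit {n : ℕ} (A : Matrix (Fin n) (Fin n) ℂ)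
    (hA : ∀ x : Fin n → ℂ, 0 ≤ (star x ⬝ᵥ A.mulVec x).re) (γ : ℝ) (h0 : 0 < γ) :
    IsUnit (1 + (γ : ℂ) • A).det := by
  rw [isUnit_iff_ne_zero]
  intro h
  obtain ⟨x, hx, hx0⟩ := Matrix.exists_mulVec_eq_zero_iff.mpr h
  obtain ⟨s, hs, hs'⟩ := aux_self_dot x hx
  have h1 := congrArg (fun v => (star x ⬝ᵥ v).re) hx0
  simp only [add_mulVec, one_mulVec, smul_mulVec, dotProduct_add, dotProduct_smul, hs',
    dotProduct_zero, smul_eq_mul, Complex.add_re, Complex.re_ofReal_mul, Complex.ofReal_re,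
    Complex.zero_re] at h1
  nlinarith [mul_nonneg h0.le (hA x)]

theorem aux_bound {n : ℕ} (A : Matrix (Fin n) (Fin n) ℂ)
    (hA : ∀ x : Fin n → ℂ, 0 ≤ (star x ⬝ᵥ A.mulVec x).re)
    (γ γt : ℝ) (h0 : 0 < γ) (hγ : γt ≤ γ) (μ : ℂ)
    (hμ : μ ∈ spectrum ℂ (1 - (1 + (γ : ℂ) • A)⁻¹ * (1 + (γt : ℂ) • A))) :
    ‖μ‖ ≤ (γ - γt) / γ := by
  have hu := aux_unit A hA γ h0
  rw [spectrum.mem_iff, Matrix.isUnit_iff_isUnit_det, isUnit_iff_ne_zero, not_not] at hμ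
  obtain ⟨x, hx, hx0⟩ := Matrix.exists_mulVec_eq_zero_iff.mpr hμ
  obtain ⟨s, hs, hs'⟩ := aux_self_dot x hx
  have h1 : (1 + (γ : ℂ) • A) * (algebraMap ℂ _ μ -
      (1 - (1 + (γ : ℂ) • A)⁻¹ * (1 + (γt : ℂ) • A))) =
      μ • (1 + (γ : ℂ) • A) - (1 + (γ : ℂ) • A) + (1 + (γt : ℂ) • A) := by
    rw [mul_sub, mul_sub, ← mul_assoc, Matrix.mul_nonsing_inv _ hu, Algebra.algebraMap_eq_smul_one]
    simp only [mul_smul_comm, mul_one, one_mul]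
    abel
  have h2 := congrArg (fun v => star x ⬝ᵥ ((1 + (γ : ℂ) • A) *ᵥ v)) hx0
  simp only [mulVec_mulVec] at h2
  rw [h1] at h2
  simp only [mulVec_zero, dotProduct_zero, add_mulVec, sub_mulVec, one_mulVec,
    smul_mulVec, dotProduct_add, dotProduct_sub, dotProduct_smul, hs', smul_eq_mul] at h2
  have hq := hA x
  generalize star x ⬝ᵥ A *ᵥ x = q at h2 hq
  have hre := congrArg Complex.re h2
  have him := congrArg Complex.im h2
  simp at hre him
  have h3 : 0 ≤ s * ((γ - γt) * μ.re - γ * (μ.re ^ 2 + μ.im ^ 2)) := by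
    have : s * ((γ - γt) * μ.re - γ * (μ.re ^ 2 + μ.im ^ 2)) =
      ((γ - γt - γ * μ.re) ^ 2 + (γ * μ.im) ^ 2) * q.re := by
      linear_combination (γ - γt - γ * μ.re) * hre - (γ * μ.im) * him
    rw [this]; positivity
  have h4 := nonneg_of_mul_nonneg_right h3 hs
  have h5 : ‖μ‖ ^ 2 = μ.re ^ 2 + μ.im ^ 2 := by
    rw [Complex.sq_norm, Complex.normSq_apply]; ring
  rw [← h5] at h4
  have h6 := Complex.re_le_norm μ
  rw [le_div_iff₀ h0]
  by_contra! hc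
  have h7 : 0 < ‖μ‖ := by
    by_contra! h
    nlinarith [norm_nonneg μ]
  nlinarith [mul_le_mul_of_nonneg_left h6 (sub_nonneg.mpr hγ)]

/-- Second assertion of Proposition 2: if `Re (x*Ax) ≥ 0` for all `x`, `0 < γ̃ ≤ γ`,
the unpreconditioned Richardson iteration converges (`γ̃ ρ(A) < 1`) and
`1/(1 + γ ρ(A)) < γ̃/γ`, then the preconditioned Richardson iteration matrix
`G̃ = I - (I+γA)⁻¹(I+γ̃A)` satisfies `ρ(G̃) < γ̃ ρ(A) = ρ(G)` for `G = -γ̃A`. -/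
theorem preconditioned_richardson_faster (n : ℕ)
    (A : Matrix (Fin n) (Fin n) ℂ)
    (hA : ∀ x : Fin n → ℂ, 0 ≤ (star x ⬝ᵥ A.mulVec x).re)
    (γ γt : ℝ) (hγt : 0 < γt) (hγ : γt ≤ γ)
    (hconv : γt * (spectralRadius ℂ A).toReal < 1)
    (hcond : 1 / (1 + γ * (spectralRadius ℂ A).toReal) < γt / γ) :
    (spectralRadius ℂ (1 - (1 + (γ : ℂ) • A)⁻¹ * (1 + (γt : ℂ) • A))).toReal <
      γt * (spectralRadius ℂ A).toReal := by
  have h0 : 0 < γ := hγt.trans_le hγ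
  have hr : 0 ≤ (spectralRadius ℂ A).toReal := ENNReal.toReal_nonneg
  have hb : 0 ≤ (γ - γt) / γ := div_nonneg (sub_nonneg.mpr hγ) h0.le
  have h1 : (spectralRadius ℂ (1 - (1 + (γ : ℂ) • A)⁻¹ * (1 + (γt : ℂ) • A))).toReal ≤
      (γ - γt) / γ := by
    refine ENNReal.toReal_le_of_le_ofReal hb ?_
    refine iSup₂_le fun μ hμ => ?_
    have := aux_bound A hA γ γt h0 hγ μ hμ
    change ‖μ‖ₑ ≤ _
    rw [← ofReal_norm]
    exact ENNReal.ofReal_le_ofReal this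
  refine h1.trans_lt ?_
  rw [div_lt_div_iff₀ (by positivity) h0] at hcond
  rw [div_lt_iff₀ h0]
  nlinarith
end
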